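/- Let n ≥ 3 with n ≠ 4, and let f ∈ Aut(F_n). Assume: (1) IA_n ⊆ N(f); (2) Γ_n(4) ⊆ ρ(N(f)); (3) the image of ρ(N(f)) ∩ SL_n(ℤ) under the reduction map SL_n(ℤ) → SL_n(ℤ/2ℤ) is nontrivial. Then N(f) = SAut(F_n) if det(f̄) = 1, and N(f) = Aut(F_n) if det(f̄) = −1. -/

import Mathlib

open Matrix

namespace NormalClosurePaper

/-- The automorphism group of the free group on `n` generators. -/
abbrev FrAut (n : ℕ) := MulAut (FreeGroup (Fin n))

/-- Exponent sum of the generator `x_i` in a word of the free group. -/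
def expSum {n : ℕ} (i : Fin n) : FreeGroup (Fin n) →* Multiplicative ℤ :=
  FreeGroup.lift fun j => Multiplicative.ofAdd (if j = i then (1 : ℤ) else 0)

/-- The abelianized matrix of an automorphism of the free group:
the `(i, j)` entry is the exponent sum of `x_i` in `f x_j`. -/
def mat {n : ℕ} (f : FrAut n) : Matrix (Fin n) (Fin n) ℤ :=
  Matrix.of fun i j => (expSum i (f (FreeGroup.of j))).toAdd

lemma expSum_apply {n : ℕ} (f : FrAut n) (i : Fin n) (w : FreeGroup (Fin n)) :
    (expSum i (f w)).toAdd = ∑ k, mat f i k * (expSum k w).toAdd := by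
  induction w using FreeGroup.induction_on with
  | C1 => simp
  | of j =>
      have h : (expSum i (f (FreeGroup.of j))).toAdd = mat f i j := rfl
      rw [h]
      simp [expSum, mul_ite, Finset.sum_ite_eq]
  | inv_of j ih =>
      simp only [_root_.map_inv, toAdd_inv, mul_neg, Finset.sum_neg_distrib, ih]
  | mul x y ihx ihy =>
      simp only [_root_.map_mul, toAdd_mul, mul_add, Finset.sum_add_distrib, ihx, ihy]

lemma mat_one {n : ℕ} : mat (1 : FrAut n) = 1 := by
  ext i j
  simp [mat, expSum, Matrix.one_apply, eq_comm]

lemma mat_mul {n : ℕ} (f g : FrAut n) : mat (f * g) = mat f * mat g := by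
  ext i j
  rw [Matrix.mul_apply]
  show (expSum i ((f * g) (FreeGroup.of j))).toAdd = _
  rw [show (f * g) (FreeGroup.of j) = f (g (FreeGroup.of j)) from rfl, expSum_apply]
  rfl

/-- The matrix of the induced map on the abelianization, as a monoid homomorphism. -/
def matHom (n : ℕ) : FrAut n →* Matrix (Fin n) (Fin n) ℤ where
  toFun := mat
  map_one' := mat_one
  map_mul' := mat_mul

/-- The homomorphism `Aut(F_n) → GL_n(ℤ)` induced by abelianization. -/
def ρ (n : ℕ) : FrAut n →* GL (Fin n) ℤ := (matHom n).toHomUnits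

/-- The composition of `ρ` with the determinant. -/
def detρ (n : ℕ) : FrAut n →* ℤˣ := (Matrix.GeneralLinearGroup.det).comp (ρ n)

/-- The special automorphism group `SAut(F_n)`: automorphisms whose induced matrix
has determinant `1`. -/
def SAut (n : ℕ) : Subgroup (FrAut n) := (detρ n).ker

/-- The Torelli subgroup `IA_n`, the kernel of `ρ`. -/
def IA (n : ℕ) : Subgroup (FrAut n) := (ρ n).ker

/-- The group of inner automorphisms of the free group. -/
def Inn (n : ℕ) : Subgroup (FrAut n) := (MulAut.conj (G := FreeGroup (Fin n))).range

instance Inn_normal (n : ℕ) : (Inn n).Normal := by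
  constructor
  rintro - ⟨a, rfl⟩ g
  refine ⟨g a, ?_⟩
  ext y
  simp [MulAut.conj_apply, MulAut.mul_apply, _root_.map_mul, _root_.map_inv]

/-- The outer automorphism group `Out(F_n)`. -/
abbrev OutF (n : ℕ) := FrAut n ⧸ Inn n

/-- The projection `Aut(F_n) → Out(F_n)`. -/
def toOut (n : ℕ) : FrAut n →* OutF n := QuotientGroup.mk' (Inn n)

lemma mat_conj {n : ℕ} (g : FreeGroup (Fin n)) : mat (MulAut.conj g) = 1 := by
  rw [← mat_one (n := n)]
  ext i j
  simp only [mat, Matrix.of_apply, MulAut.conj_apply, MulAut.one_apply, _root_.map_mul,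
    _root_.map_inv, toAdd_mul, toAdd_inv]
  omega

lemma ρ_conj {n : ℕ} (g : FreeGroup (Fin n)) : ρ n (MulAut.conj g) = 1 :=
  Units.ext (mat_conj g)

/-- The homomorphism `Out(F_n) → GL_n(ℤ)` induced by abelianization. -/
def ρOut (n : ℕ) : OutF n →* GL (Fin n) ℤ :=
  QuotientGroup.lift (Inn n) (ρ n) (by rintro - ⟨g, rfl⟩; exact ρ_conj g)

/-- The composition of `ρOut` with the determinant. -/
def detρOut (n : ℕ) : OutF n →* ℤˣ := (Matrix.GeneralLinearGroup.det).comp (ρOut n)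

/-- The special outer automorphism group `SOut(F_n)`. -/
def SOut (n : ℕ) : Subgroup (OutF n) := (detρOut n).ker

/-- Entrywise reduction `GL_n(ℤ) → GL_n(ℤ/ℓℤ)`. -/
def redGL (n ℓ : ℕ) : GL (Fin n) ℤ →* GL (Fin n) (ZMod ℓ) :=
  Units.map (RingHom.mapMatrix (Int.castRingHom (ZMod ℓ))).toMonoidHom

/-- The subgroup `GΓ_n(ℓ)` of `GL_n(ℤ)` of matrices congruent to the identity mod `ℓ`. -/
def GGamma (n ℓ : ℕ) : Subgroup (GL (Fin n) ℤ) := (redGL n ℓ).ker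

/-- The level `ℓ` congruence subgroup `Γ_n(ℓ)` (viewed inside `GL_n(ℤ)`): matrices with
determinant `1` that are congruent to the identity mod `ℓ`. -/
def GammaGL (n ℓ : ℕ) : Subgroup (GL (Fin n) ℤ) :=
  GGamma n ℓ ⊓ (Matrix.GeneralLinearGroup.det).ker

/-- Reduction `SL_n(ℤ) → SL_n(ℤ/ℓℤ)`. -/
def redSL (n ℓ : ℕ) : Matrix.SpecialLinearGroup (Fin n) ℤ →*
    Matrix.SpecialLinearGroup (Fin n) (ZMod ℓ) :=
  Matrix.SpecialLinearGroup.map (Int.castRingHom (ZMod ℓ))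

/-- Projection `SL_n(ℤ/ℓℤ) → PSL_n(ℤ/ℓℤ)`. -/
def projPSL (n ℓ : ℕ) : Matrix.SpecialLinearGroup (Fin n) (ZMod ℓ) →*
    Matrix.ProjectiveSpecialLinearGroup (Fin n) (ZMod ℓ) :=
  QuotientGroup.mk' _


/-- The inclusion `SL_n(ℤ) → GL_n(ℤ)`. -/
def toGLZ (n : ℕ) : Matrix.SpecialLinearGroup (Fin n) ℤ →* GL (Fin n) ℤ :=
  Matrix.SpecialLinearGroup.toGL

/-! Write `H` for `ρ(N(f)) ∩ SL_n(ℤ)`. The Euclidean algorithm shows that `SL_n(ℤ)` is generated by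
transvections, and these lift to Nielsen automorphisms, so `H` is normal in `SL_n(ℤ)`. Its image in
`SL_n(ℤ/2ℤ)` is everything by Iwasawa's simplicity criterion, that is, `H · Γ_n(2) = SL_n(ℤ)`. Since
`[Γ_n(2), Γ_n(2)] ⊆ Γ_n(4) ⊆ H`, the quotient `SL_n(ℤ) / H` is abelian; as `SL_n(ℤ)` is perfect,
`H = SL_n(ℤ)`. Because `N(f)` contains `IA_n`, this lifts to `SAut(F_n) ⊆ N(f)`. -/

open Matrix.SpecialLinearGroup
open scoped commutatorElement

section ElementaryGeneration

variable {ι R : Type*} [Fintype ι] [DecidableEq ι] [CommRing R]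

variable (ι R) in
/-- The elementary subgroup `E(ι, R)` of `SL(ι, R)`, generated by the transvections. -/
def elementarySubgroup : Subgroup (SpecialLinearGroup ι R) :=
  Subgroup.closure {g | ∃ (i j : ι) (hij : i ≠ j) (c : R), g = transvection hij c}

lemma transvection_mem_elementarySubgroup {i j : ι} (hij : i ≠ j) (c : R) :
    transvection hij c ∈ elementarySubgroup ι R :=
  Subgroup.subset_closure ⟨i, j, hij, c, rfl⟩

lemma elementarySubgroup_le {H : Subgroup (SpecialLinearGroup ι R)}
    (hH : ∀ (i j : ι) (hij : i ≠ j) (c : R), transvection hij c ∈ H) :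
    elementarySubgroup ι R ≤ H := by
  rw [elementarySubgroup, Subgroup.closure_le]
  rintro _ ⟨i, j, hij, c, rfl⟩
  exact hH i j hij c

variable (R) in
/-- The matrices in `SL(ι, R)` whose columns outside `s` are those of the identity, encoded as the
pointwise stabilizer of the standard basis vectors indexed by the complement of `s`. -/
def columnSubgroup (s : Finset ι) : Subgroup (SpecialLinearGroup ι R) :=
  fixingSubgroup (SpecialLinearGroup ι R) ((fun j => Pi.single j (1 : R)) '' {j | j ∉ s})

lemma smul_single_one_apply (g : SpecialLinearGroup ι R) (i j : ι) :
    (g • Pi.single j (1 : R) : ι → R) i = g i j := by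
  change (g.1 *ᵥ Pi.single j 1) i = g i j
  rw [mulVec_single_one, col_apply]

lemma mem_columnSubgroup_iff {s : Finset ι} {g : SpecialLinearGroup ι R} :
    g ∈ columnSubgroup R s ↔ ∀ j ∉ s, ∀ i, g i j = (1 : Matrix ι ι R) i j := by
  simp only [columnSubgroup, mem_fixingSubgroup_iff, Set.forall_mem_image, Set.mem_ofPred_eq,
    funext_iff, smul_single_one_apply, one_apply, Pi.single_apply]

lemma transvection_mem_columnSubgroup {s : Finset ι} {i j : ι} (hij : i ≠ j) (hj : j ∈ s)
    (c : R) : transvection hij c ∈ columnSubgroup R s := by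
  refine mem_columnSubgroup_iff.2 fun k hk a => ?_
  have hjk : j ≠ k := ne_of_mem_of_not_mem hj hk
  simp [transvection_coe, hjk]

lemma transvection_mul_apply_same {i j : ι} (hij : i ≠ j) (c : R)
    (g : SpecialLinearGroup ι R) (b : ι) :
    (transvection hij c * g) i b = g i b + c * g j b :=
  Matrix.transvection_mul_apply_same i j b c g.1

lemma transvection_mul_apply_of_ne {i j : ι} (hij : i ≠ j) (c : R)
    (g : SpecialLinearGroup ι R) {a : ι} (ha : a ≠ i) (b : ι) :
    (transvection hij c * g) a b = g a b :=
  Matrix.transvection_mul_apply_of_ne i j a b ha c g.1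

lemma mem_of_transvection_mul_mem_elementarySubgroup {i j : ι} {hij : i ≠ j} {c : R}
    {g : SpecialLinearGroup ι R} (h : transvection hij c * g ∈ elementarySubgroup ι R) :
    g ∈ elementarySubgroup ι R :=
  (Subgroup.mul_mem_cancel_left _ (transvection_mem_elementarySubgroup hij c)).1 h

lemma apply_self_eq_one_of_mem_columnSubgroup_singleton {i : ι} {g : SpecialLinearGroup ι R}
    (hg : g ∈ columnSubgroup R {i}) : g i i = 1 := by
  have hcol : g.1 = updateCol 1 i fun a => g a i := by
    ext a j
    rcases eq_or_ne j i with rfl | hj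
    · simp
    · simp [hj, mem_columnSubgroup_iff.1 hg j (by simpa using hj) a]
  have hdet := g.det_coe
  rwa [hcol, ← cramer_apply, cramer_one] at hdet

lemma columnSubgroup_singleton_le_elementarySubgroup (i : ι) :
    columnSubgroup R {i} ≤ elementarySubgroup ι R := by
  suffices h : ∀ (t : Finset ι), i ∉ t → ∀ g ∈ columnSubgroup R {i},
      (∀ a ∉ t, g a i = (1 : Matrix ι ι R) a i) → g ∈ elementarySubgroup ι R by
    intro g hg
    refine h (Finset.univ.erase i) (by simp) g hg fun a ha => ?_
    obtain rfl : a = i := by simpa using ha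
    simp [apply_self_eq_one_of_mem_columnSubgroup_singleton hg]
  intro t
  induction t using Finset.induction_on with
  | empty =>
    intro _ g hg hgi
    convert one_mem (elementarySubgroup ι R)
    ext a j
    rcases eq_or_ne j i with rfl | hj
    · exact hgi a (by simp)
    · exact mem_columnSubgroup_iff.1 hg j (by simpa using hj) a
  | insert a t ha ih =>
    intro hi g hg hgi
    obtain ⟨hia, hit⟩ : i ≠ a ∧ i ∉ t := by simpa using hi
    refine mem_of_transvection_mul_mem_elementarySubgroup (hij := hia.symm) (c := -g a i)
      (ih hit _ (mul_mem (transvection_mem_columnSubgroup hia.symm (by simp) _) hg) fun b hb => ?_)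
    rcases eq_or_ne b a with rfl | hba
    · simp [transvection_mul_apply_same, apply_self_eq_one_of_mem_columnSubgroup_singleton hg,
        hia.symm]
    · rw [transvection_mul_apply_of_ne _ _ _ hba, hgi b (by simp [hba, hb])]

lemma mem_elementarySubgroup_of_apply_self_eq_one {s : Finset ι} {i : ι}
    (hs : columnSubgroup R s ≤ elementarySubgroup ι R) {g : SpecialLinearGroup ι R}
    (hg : g ∈ columnSubgroup R (insert i s)) (hgi : g i i = 1) :
    g ∈ elementarySubgroup ι R := by
  let h : SpecialLinearGroup ι R :=
    ⟨updateCol 1 i fun a => g a i, by rw [← cramer_apply, cramer_one]; exact hgi⟩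
  have hi : h ∈ columnSubgroup R {i} := mem_columnSubgroup_iff.2 fun j hj a => by
    simp [h, show j ≠ i by simpa using hj]
  have hmul : h⁻¹ * g ∈ columnSubgroup R s := by
    simp only [columnSubgroup, mem_fixingSubgroup_iff, Set.forall_mem_image, Set.mem_ofPred_eq,
      mul_smul, inv_smul_eq_iff]
    intro j hj
    ext a
    rw [smul_single_one_apply, smul_single_one_apply]
    rcases eq_or_ne j i with rfl | hji
    · simp [h]
    · simp [h, hji, mem_columnSubgroup_iff.1 hg j (by simp [hji, hj]) a]
  simpa using mul_mem (columnSubgroup_singleton_le_elementarySubgroup i hi) (hs hmul)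

lemma isUnit_of_forall_dvd_column {s : Finset ι} {i : ι} (hi : i ∈ s)
    {g : SpecialLinearGroup ι R} (hg : g ∈ columnSubgroup R s) {x : R}
    (hx : ∀ k ∈ s, x ∣ g k i) : IsUnit x := by
  rw [isUnit_iff_dvd_one]
  have hone : ∑ k, g⁻¹ i k * g k i = 1 := by
    rw [← Matrix.mul_apply, ← coe_mul, inv_mul_cancel, coe_one, one_apply_eq]
  rw [← hone]
  refine Finset.dvd_sum fun k _ => ?_
  by_cases hk : k ∈ s
  · exact (hx k hk).mul_left _
  · have hik : i ≠ k := ne_of_mem_of_not_mem hi hk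
    rw [mem_columnSubgroup_iff.1 (inv_mem hg) k hk i, one_apply_ne hik, zero_mul]
    exact dvd_zero x

lemma mem_elementarySubgroup_of_isUnit_of_ne {s : Finset ι} {i k : ι} (hki : k ≠ i) (hk : k ∈ s)
    (hs : columnSubgroup R s ≤ elementarySubgroup ι R) {g : SpecialLinearGroup ι R}
    (hg : g ∈ columnSubgroup R (insert i s)) (hu : IsUnit (g k i)) :
    g ∈ elementarySubgroup ι R := by
  obtain ⟨v, hv⟩ := hu.exists_left_inv
  refine mem_of_transvection_mul_mem_elementarySubgroup (hij := hki.symm) (c := (1 - g i i) * v)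
    (mem_elementarySubgroup_of_apply_self_eq_one hs
      (mul_mem (transvection_mem_columnSubgroup _ (Finset.mem_insert_of_mem hk) _) hg) ?_)
  rw [transvection_mul_apply_same, mul_assoc, hv]
  ring

lemma mem_elementarySubgroup_of_isUnit {s : Finset ι} (hne : s.Nonempty) {i k : ι} (hi : i ∉ s)
    (hk : k ∈ insert i s) (hs : columnSubgroup R s ≤ elementarySubgroup ι R)
    {g : SpecialLinearGroup ι R} (hg : g ∈ columnSubgroup R (insert i s))
    (hu : IsUnit (g k i)) : g ∈ elementarySubgroup ι R := by
  rcases Finset.mem_insert.1 hk with rfl | hks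
  · obtain ⟨c, hc⟩ := hne
    have hck : c ≠ k := ne_of_mem_of_not_mem hc hi
    obtain ⟨v, hv⟩ := hu.exists_left_inv
    refine mem_of_transvection_mul_mem_elementarySubgroup (hij := hck) (c := (1 - g c k) * v)
      (mem_elementarySubgroup_of_isUnit_of_ne hck hc hs
        (mul_mem (transvection_mem_columnSubgroup _ hk _) hg) ?_)
    rw [transvection_mul_apply_same, mul_assoc, hv]
    simp
  · exact mem_elementarySubgroup_of_isUnit_of_ne (ne_of_mem_of_not_mem hks hi) hks hs hg hu

end ElementaryGeneration

section EuclideanDomain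

variable {ι R : Type*} [Fintype ι] [DecidableEq ι] [EuclideanDomain R]

-- The Euclidean algorithm on column `i`: an entry not divisible by `g k i` is replaced by its
-- remainder, until some nonzero entry divides the whole column and hence is a unit.
lemma mem_elementarySubgroup_of_apply_ne_zero {s : Finset ι} (hne : s.Nonempty) {i k : ι}
    (hi : i ∉ s) (hk : k ∈ insert i s) (hs : columnSubgroup R s ≤ elementarySubgroup ι R)
    {g : SpecialLinearGroup ι R} (hg : g ∈ columnSubgroup R (insert i s)) (hki : g k i ≠ 0) :
    g ∈ elementarySubgroup ι R := by
  induction hx : g k i using (EuclideanDomain.r_wellFounded (R := R)).induction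
    generalizing g k with
  | _ x ih =>
    subst hx
    by_cases hdvd : ∀ c ∈ insert i s, g k i ∣ g c i
    · exact mem_elementarySubgroup_of_isUnit hne hi hk hs hg
        (isUnit_of_forall_dvd_column (Finset.mem_insert_self i s) hg hdvd)
    · push Not at hdvd
      obtain ⟨c, hc, hndvd⟩ := hdvd
      have hck : c ≠ k := fun h => hndvd (h ▸ dvd_rfl)
      have hmod : (transvection hck (-(g c i / g k i)) * g) c i = g c i % g k i := by
        rw [transvection_mul_apply_same, EuclideanDomain.mod_eq_sub_mul_div]
        ring
      refine mem_of_transvection_mul_mem_elementarySubgroup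
        (ih _ (EuclideanDomain.mod_lt _ hki) hc
          (mul_mem (transvection_mem_columnSubgroup hck hk _) hg) ?_ hmod)
      rwa [hmod, Ne, EuclideanDomain.mod_eq_zero]

lemma columnSubgroup_le_elementarySubgroup (s : Finset ι) :
    columnSubgroup R s ≤ elementarySubgroup ι R := by
  induction s using Finset.induction_on with
  | empty =>
    intro g hg
    convert one_mem (elementarySubgroup ι R)
    ext i j
    exact mem_columnSubgroup_iff.1 hg j (by simp) i
  | insert i s hi ih =>
    rcases s.eq_empty_or_nonempty with rfl | hne
    · exact columnSubgroup_singleton_le_elementarySubgroup i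
    · intro g hg
      obtain ⟨k, hk, hki⟩ : ∃ k ∈ insert i s, g k i ≠ 0 := by
        by_contra! h
        exact not_isUnit_zero (isUnit_of_forall_dvd_column (x := 0)
          (Finset.mem_insert_self i s) hg fun k hk => (h k hk).symm ▸ dvd_rfl)
      exact mem_elementarySubgroup_of_apply_ne_zero hne hi hk ih hg hki

theorem elementarySubgroup_eq_top : elementarySubgroup ι R = ⊤ :=
  eq_top_iff.2 fun _ _ => columnSubgroup_le_elementarySubgroup Finset.univ
    (mem_columnSubgroup_iff.2 fun j hj => absurd (Finset.mem_univ j) hj)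

end EuclideanDomain

section Commutators

variable {ι R : Type*} [Fintype ι] [DecidableEq ι] [CommRing R]

lemma commutatorElement_transvection {i j k : ι} (hik : i ≠ k) (hkj : k ≠ j) (hij : i ≠ j)
    (c d : R) : ⁅transvection hik c, transvection hkj d⁆ = transvection hij (c * d) := by
  rw [commutatorElement_def, transvection_inv, transvection_inv]
  ext a b
  simp [transvection_coe, mul_add, add_mul, hik.symm, hkj.symm, hij.symm, ← single_neg,
    single_mul_single_of_ne]
  abel

lemma elementarySubgroup_le_commutator (hι : 3 ≤ Fintype.card ι) :
    elementarySubgroup ι R ≤ commutator (SpecialLinearGroup ι R) := by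
  refine elementarySubgroup_le fun i j hij c => ?_
  obtain ⟨k, -, hk⟩ := Finset.exists_mem_notMem_of_card_lt_card
    (Finset.card_le_two (a := i) (b := j) |>.trans_lt hι)
  simp only [Finset.mem_insert, Finset.mem_singleton, not_or] at hk
  rw [← mul_one c, ← commutatorElement_transvection (Ne.symm hk.1) hk.2 hij]
  exact Subgroup.commutator_mem_commutator (Subgroup.mem_top _) (Subgroup.mem_top _)

lemma commutator_specialLinearGroup_eq_top {R : Type*} [EuclideanDomain R]
    (hι : 3 ≤ Fintype.card ι) : commutator (SpecialLinearGroup ι R) = ⊤ :=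
  eq_top_iff.2 (elementarySubgroup_eq_top.ge.trans (elementarySubgroup_le_commutator hι))

lemma sub_one_apply_mem_ker {S : Type*} [CommRing S] {φ : R →+* S} {g : SpecialLinearGroup ι R}
    (hg : g ∈ (SpecialLinearGroup.map φ).ker) (i j : ι) : (g.1 - 1) i j ∈ RingHom.ker φ := by
  have hij : φ (g i j) = (1 : Matrix ι ι S) i j :=
    congrFun₂ (congrArg (fun A : SpecialLinearGroup ι S => A.1) (MonoidHom.mem_ker.1 hg)) i j
  simp [RingHom.mem_ker, hij, one_apply, apply_ite φ]

lemma commutator_ker_map_le {S₁ S₂ T : Type*} [CommRing S₁] [CommRing S₂] [CommRing T]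
    {φ₁ : R →+* S₁} {φ₂ : R →+* S₂} {ψ : R →+* T}
    (hψ : RingHom.ker φ₁ * RingHom.ker φ₂ ≤ RingHom.ker ψ) :
    ⁅(SpecialLinearGroup.map (n := ι) φ₁).ker, (SpecialLinearGroup.map (n := ι) φ₂).ker⁆ ≤
      (SpecialLinearGroup.map (n := ι) ψ).ker := by
  refine Subgroup.commutator_le.2 fun g hg h hh => ?_
  rw [MonoidHom.mem_ker, map_commutatorElement, commutatorElement_eq_one_iff_mul_comm,
    ← map_mul, ← map_mul]
  ext i j
  have hsub : (g * h).1 - (h * g).1 = (g.1 - 1) * (h.1 - 1) - (h.1 - 1) * (g.1 - 1) := by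
    rw [coe_mul, coe_mul]
    noncomm_ring
  change ψ ((g * h).1 i j) = ψ ((h * g).1 i j)
  rw [← sub_eq_zero, ← map_sub, ← RingHom.mem_ker, ← Matrix.sub_apply, hsub, Matrix.sub_apply,
    mul_apply, mul_apply]
  refine sub_mem
    (sum_mem fun k _ => hψ (Ideal.mul_mem_mul (sub_one_apply_mem_ker hg i k)
      (sub_one_apply_mem_ker hh k j)))
    (sum_mem fun k _ => hψ (Ideal.mul_mem_mul_rev (sub_one_apply_mem_ker hg k j)
      (sub_one_apply_mem_ker hh i k)))

end Commutators

section Simplicity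

variable {ι : Type*} [Fintype ι] [DecidableEq ι]

lemma center_specialLinearGroup_eq_bot {R : Type*} [CommRing R] [Subsingleton Rˣ] :
    Subgroup.center (SpecialLinearGroup ι R) = ⊥ := by
  have := (center_equiv_rootsOfUnity (n := ι) (R := R)).subsingleton
  exact Subgroup.eq_bot_of_subsingleton _

variable {F : Type*} [Field F]

open scoped LinearAlgebra.Projectivization

lemma transvection_mem_iSup_lineStab {i j : ι} (hij : i ≠ j) (c : F) :
    transvection hij c ∈ ⨆ p : ℙ F (ι → F), lineStab p.submodule := by
  have hi : (Pi.single i 1 : ι → F) ≠ 0 := Pi.single_ne_zero_iff.2 one_ne_zero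
  refine Subgroup.mem_iSup_of_mem (Projectivization.mk F (Pi.single i 1) hi) ?_
  rw [Projectivization.submodule_mk]
  exact SL2Gen.transvection_mem_lineStab hij c

variable (ι F) in
/-- The Iwasawa structure of `SL(ι, F)` acting on its projective space, which attaches to a line
the group of transvections in its direction. -/
def iwasawaStructure :
    MulAction.IwasawaStructure (SpecialLinearGroup ι F) (ℙ F (ι → F)) where
  T p := lineStab p.submodule
  is_comm p := by
    rw [← Projectivization.mk_rep p, Projectivization.submodule_mk]
    exact lineStab_isMulCommutative_of_span p.rep p.rep_nonzero
  is_conj g p := by rw [PSL.smul_submodule, lineStab_smul]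
  is_generator := eq_top_iff.2 <| (elementarySubgroup_eq_top (ι := ι) (R := F)).ge.trans <|
    elementarySubgroup_le fun _ _ => transvection_mem_iSup_lineStab

theorem eq_top_of_normal_of_not_le_center (hι : 3 ≤ Fintype.card ι)
    {N : Subgroup (SpecialLinearGroup ι F)} [N.Normal]
    (hN : ¬ N ≤ Subgroup.center (SpecialLinearGroup ι F)) : N = ⊤ := by
  have : Nontrivial ι := Fintype.one_lt_card_iff_nontrivial.1 (by lia)
  rw [← top_le_iff, ← commutator_specialLinearGroup_eq_top (ι := ι) (R := F) hι]
  refine (iwasawaStructure ι F).commutator_le N fun hfix => hN fun g hg => ?_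
  rw [← Projectivization.SL_mulAction_ker]
  exact MonoidHom.mem_ker.2 (Equiv.ext fun p => Set.eq_univ_iff_forall.1 hfix p ⟨g, hg⟩)

end Simplicity

section CongruenceSubgroups

lemma eq_top_of_sup_eq_top_of_commutator_le {G : Type*} [Group G] (hG : commutator G = ⊤)
    {H K : Subgroup G} [H.Normal] (hHK : H ⊔ K = ⊤) (hK : ⁅K, K⁆ ≤ H) : H = ⊤ := by
  have hmap : K.map (QuotientGroup.mk' H) = ⊤ := by
    rw [← Subgroup.map_top_of_surjective _ (QuotientGroup.mk'_surjective H), ← hHK,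
      Subgroup.map_sup, QuotientGroup.map_mk'_self, bot_sup_eq]
  rw [← top_le_iff, ← hG, ← QuotientGroup.ker_mk' H, ← Subgroup.map_eq_bot_iff, commutator_def,
    Subgroup.map_commutator, Subgroup.map_top_of_surjective _ (QuotientGroup.mk'_surjective H),
    ← hmap, ← Subgroup.map_commutator, Subgroup.map_eq_bot_iff, QuotientGroup.ker_mk']
  exact hK

variable {ι R : Type*} [Fintype ι] [DecidableEq ι]

lemma map_transvection {S : Type*} [CommRing R] [CommRing S] (φ : R →+* S) {i j : ι}
    (hij : i ≠ j) (c : R) :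
    SpecialLinearGroup.map φ (transvection hij c) = transvection hij (φ c) := by
  ext a b
  simp only [map_apply_coe, transvection_coe, map_add, map_one, RingHom.mapMatrix_apply,
    map_single]

lemma map_specialLinearGroup_surjective {S : Type*} [CommRing R] [EuclideanDomain S]
    {φ : R →+* S} (hφ : Function.Surjective φ) :
    Function.Surjective (SpecialLinearGroup.map (n := ι) φ) := by
  rw [← MonoidHom.range_eq_top, ← top_le_iff, ← elementarySubgroup_eq_top]
  refine elementarySubgroup_le fun i j hij c => ?_
  obtain ⟨b, rfl⟩ := hφ c
  exact ⟨transvection hij b, map_transvection φ hij b⟩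

theorem eq_top_of_ker_map_le_of_not_map_le_center {F S : Type*} [EuclideanDomain R] [Field F]
    [CommRing S] (hι : 3 ≤ Fintype.card ι) {φ : R →+* F} (hφ : Function.Surjective φ)
    {ψ : R →+* S} (hψ : RingHom.ker φ * RingHom.ker φ ≤ RingHom.ker ψ)
    {H : Subgroup (SpecialLinearGroup ι R)} [hH : H.Normal]
    (hker : (SpecialLinearGroup.map ψ).ker ≤ H)
    (hmap : ¬ H.map (SpecialLinearGroup.map φ) ≤ Subgroup.center (SpecialLinearGroup ι F)) :
    H = ⊤ := by
  have := hH.map _ (map_specialLinearGroup_surjective (ι := ι) hφ)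
  have hHmap : H.map (SpecialLinearGroup.map φ) = ⊤ := eq_top_of_normal_of_not_le_center hι hmap
  refine eq_top_of_sup_eq_top_of_commutator_le (commutator_specialLinearGroup_eq_top hι)
    (K := (SpecialLinearGroup.map φ).ker) ?_ ((commutator_ker_map_le hψ).trans hker)
  rw [← Subgroup.comap_map_eq, hHmap, Subgroup.comap_top]

end CongruenceSubgroups

section NielsenAutomorphisms

variable {n : ℕ}

/-- The endomorphism of `F_n` sending `x_j` to `x_j x_i ^ c` and fixing the other generators. -/
def nielsenHom (i j : Fin n) (c : ℤ) : FreeGroup (Fin n) →* FreeGroup (Fin n) :=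
  FreeGroup.lift fun k => if k = j then FreeGroup.of j * FreeGroup.of i ^ c else FreeGroup.of k

lemma nielsenHom_comp_nielsenHom_neg {i j : Fin n} (hij : i ≠ j) (c : ℤ) :
    (nielsenHom i j c).comp (nielsenHom i j (-c)) = MonoidHom.id _ := by
  ext k
  by_cases hk : k = j <;> simp [nielsenHom, hk, hij]

/-- The Nielsen automorphism of `F_n` sending `x_j` to `x_j x_i ^ c`, for `i ≠ j`. -/
def nielsen {i j : Fin n} (hij : i ≠ j) (c : ℤ) : FrAut n :=
  MonoidHom.toMulEquiv (nielsenHom i j c) (nielsenHom i j (-c))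
    (by simpa using nielsenHom_comp_nielsenHom_neg hij (-c)) (nielsenHom_comp_nielsenHom_neg hij c)

lemma nielsen_of {i j : Fin n} (hij : i ≠ j) (c : ℤ) (k : Fin n) :
    nielsen hij c (FreeGroup.of k) =
      if k = j then FreeGroup.of j * FreeGroup.of i ^ c else FreeGroup.of k :=
  FreeGroup.lift_apply_of

lemma expSum_of (i j : Fin n) :
    (expSum i (FreeGroup.of j)).toAdd = (1 : Matrix (Fin n) (Fin n) ℤ) i j := by
  simp [expSum, one_apply, eq_comm]

lemma ρ_nielsen {i j : Fin n} (hij : i ≠ j) (c : ℤ) :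
    ρ n (nielsen hij c) = toGLZ n (transvection hij c) := by
  ext a b
  change (expSum a (nielsen hij c (FreeGroup.of b))).toAdd = (1 + single i j c) a b
  rw [nielsen_of]
  split_ifs with hb
  · subst hb
    rw [map_mul, map_zpow, toAdd_mul, toAdd_zpow, expSum_of, expSum_of]
    simp [one_apply, single_apply, eq_comm]
  · simp [expSum_of, Ne.symm hb]

lemma range_toGLZ_le_range_ρ : (toGLZ n).range ≤ (ρ n).range := by
  rw [MonoidHom.range_eq_map, Subgroup.map_le_iff_le_comap, ← elementarySubgroup_eq_top]
  exact elementarySubgroup_le fun i j hij c => ⟨nielsen hij c, ρ_nielsen hij c⟩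

instance normal_comap_toGLZ_map_ρ (N : Subgroup (FrAut n)) [hN : N.Normal] :
    (Subgroup.comap (toGLZ n) (N.map (ρ n))).Normal where
  conj_mem A := by
    rintro ⟨m, hm, hmA⟩ B
    obtain ⟨g, hg⟩ := range_toGLZ_le_range_ρ ⟨B, rfl⟩
    exact ⟨g * m * g⁻¹, hN.conj_mem m hm g, by simp only [map_mul, map_inv, hmA, hg]⟩

end NielsenAutomorphisms

section SpecialAutomorphisms

variable {n : ℕ} {N : Subgroup (FrAut n)}

lemma SAut_le_of_comap_toGLZ_map_ρ_eq_top (hIA : IA n ≤ N)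
    (h : Subgroup.comap (toGLZ n) (N.map (ρ n)) = ⊤) : SAut n ≤ N := by
  intro g hg
  have hdet : (ρ n g).val.det = 1 := congrArg Units.val hg
  obtain ⟨m, hm, hmg⟩ := h.ge (Subgroup.mem_top ⟨(ρ n g).val, hdet⟩)
  have hρ : ρ n m = ρ n g := hmg.trans (Units.ext rfl)
  have hmem : m⁻¹ * g ∈ IA n := MonoidHom.mem_ker.2 (by simp [hρ])
  simpa using mul_mem hm (hIA hmem)

lemma ker_redSL_le_comap_toGLZ_GammaGL (n ℓ : ℕ) :
    (redSL n ℓ).ker ≤ (GammaGL n ℓ).comap (toGLZ n) :=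
  fun g hg => ⟨Units.ext (congrArg Subtype.val hg), Units.ext g.det_coe⟩

lemma SAut_le_of_level_four [N.Normal] (hn : 3 ≤ n) (hIA : IA n ≤ N)
    (hΓ : GammaGL n 4 ≤ N.map (ρ n))
    (hred : (Subgroup.comap (toGLZ n) (N.map (ρ n))).map (redSL n 2) ≠ ⊥) : SAut n ≤ N := by
  refine SAut_le_of_comap_toGLZ_map_ρ_eq_top hIA ?_
  have hker : RingHom.ker (Int.castRingHom (ZMod 2)) * RingHom.ker (Int.castRingHom (ZMod 2)) ≤
      RingHom.ker (Int.castRingHom (ZMod 4)) := by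
    rw [ZMod.ker_intCastRingHom, ZMod.ker_intCastRingHom, Ideal.span_singleton_mul_span_singleton]
    norm_num
  refine eq_top_of_ker_map_le_of_not_map_le_center (by simpa using hn)
    (ZMod.ringHom_surjective _) hker
    ((ker_redSL_le_comap_toGLZ_GammaGL n 4).trans (Subgroup.comap_mono hΓ)) ?_
  rwa [center_specialLinearGroup_eq_bot, le_bot_iff]

lemma eq_top_of_SAut_le {f : FrAut n} (hN : SAut n ≤ N) (hf : f ∈ N) (hdet : detρ n f = -1) :
    N = ⊤ := by
  refine eq_top_iff.2 fun g _ => ?_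
  rcases Int.units_eq_one_or (detρ n g) with hg | hg
  · exact hN hg
  · have hfg : f⁻¹ * g ∈ SAut n := MonoidHom.mem_ker.2 (by simp [hdet, hg])
    simpa using mul_mem hf (hN hfg)

end SpecialAutomorphisms

theorem normalClosure_of_level_four_general (n : ℕ) (hn : 3 ≤ n) (f : FrAut n)
    (h1 : IA n ≤ Subgroup.normalClosure {f})
    (h2 : GammaGL n 4 ≤ (Subgroup.normalClosure {f}).map (ρ n))
    (h3 : Subgroup.map (redSL n 2)
        (Subgroup.comap (toGLZ n) ((Subgroup.normalClosure {f}).map (ρ n))) ≠ ⊥) :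
    (detρ n f = 1 → Subgroup.normalClosure {f} = SAut n) ∧
    (detρ n f = -1 → Subgroup.normalClosure {f} = ⊤) := by
  have hSAut : SAut n ≤ Subgroup.normalClosure {f} := SAut_le_of_level_four hn h1 h2 h3
  have : (SAut n).Normal := MonoidHom.normal_ker _
  exact ⟨fun hdet => (Subgroup.normalClosure_le_normal
      (Set.singleton_subset_iff.2 hdet)).antisymm hSAut,
    eq_top_of_SAut_le hSAut (Subgroup.subset_normalClosure rfl)⟩

/-- **Lemma 3.8 (level 4).** For `n ≥ 3`, `n ≠ 4`, and `f ∈ Aut(F_n)`: if `IA_n ⊆ N(f)`,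
`Γ_n(4) ⊆ ρ(N(f))`, and the image of `ρ(N(f)) ∩ SL_n(ℤ)` in `SL_n(ℤ/2ℤ)` is nontrivial,
then `N(f) = SAut(F_n)` if `det f̄ = 1` and `N(f) = Aut(F_n)` if `det f̄ = -1`. -/
theorem normalClosure_of_level_four (n : ℕ) (hn : 3 ≤ n) (hn4 : n ≠ 4) (f : FrAut n)
    (h1 : IA n ≤ Subgroup.normalClosure {f})
    (h2 : GammaGL n 4 ≤ (Subgroup.normalClosure {f}).map (ρ n))
    (h3 : Subgroup.map (redSL n 2)
        (Subgroup.comap (toGLZ n) ((Subgroup.normalClosure {f}).map (ρ n))) ≠ ⊥) :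
    (detρ n f = 1 → Subgroup.normalClosure {f} = SAut n) ∧
    (detρ n f = -1 → Subgroup.normalClosure {f} = ⊤) :=
  normalClosure_of_level_four_general n hn f h1 h2 h3

end NormalClosurePaper
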